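/- Let k ∈ (0,1) and q = e^{−πK'/K}. For every n ∈ ℕ, Kuznetsov's moment integral I_n^− has the Lambert series representation I_n^− = −(π/K)^{2n+4} (E_{2n+3}(0) + 4 Σ_{m≥1} m^{2n+3} q^m/(1 − (−q)^m)). -/

import Mathlib

/-!
Write `a = K`, `b = K'`, `M = 2 n + 4`. The identity holds for arbitrary positive `a`, `b`; the only
fact needed about the elliptic integrals is their positivity (`ellipticK_pos`).

The kernel `1 / (cosh (b t) - cos (a t))` is a product of two geometric series (`kernel_hasSum`).
Substituting `x = t ^ 2` and integrating termwise against `t ^ (2 n + 3)`, each of the two integrals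
becomes `4 (M - 1)!` times the sum of `(c b - i d a) ^ (-M)` (or the same with `a`, `b` exchanged)
over the integer points with `c + d` odd in the cone `c > |d|` (`moment_eq`). The two cones and their
negatives cover all of `{(c, d) ∈ ℤ² : c + d odd}`, so `I_n^-` equals `-2 (M - 1)!` times a full
Eisenstein-type sum over this set (`tsum_oddTerm_eq_coneSum`).

Summing the same series row by row in `c` (`tsum_oddTerm_eq_rowSum`), the row `c = 0` is an odd zeta
sum, which gives the Bernoulli number (`rowSum_zero`), and each row `c ≠ 0` is evaluated by the
Lipschitz formula `EisensteinSeries.qExpansion_identity_pnat`; the sum over `c` is then geometric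
and yields the Lambert series (`tsum_rowSum`).
-/

open MeasureTheory Real

/-- The complete elliptic integral of the first kind `K(k)`. -/
noncomputable def ellipticK (k : ℝ) : ℝ :=
  ∫ θ in (0 : ℝ)..(π / 2), (1 - k ^ 2 * Real.sin θ ^ 2) ^ (-(1 / 2) : ℝ)

/-- Kuznetsov's moment integral `I_n^+`, realizing
`(1/2)∫_ℝ x^n dx/(cos(√x K) + cosh(√x K'))` with `√x = i√(−x)` for `x < 0`. -/
noncomputable def Iplus (k : ℝ) (n : ℕ) : ℝ :=
  (1 / 2) * (∫ x in Set.Ioi (0 : ℝ), x ^ n /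
      (Real.cos (ellipticK k * Real.sqrt x) +
        Real.cosh (ellipticK (Real.sqrt (1 - k ^ 2)) * Real.sqrt x)))
  + ((-1 : ℝ) ^ n / 2) * (∫ x in Set.Ioi (0 : ℝ), x ^ n /
      (Real.cosh (ellipticK k * Real.sqrt x) +
        Real.cos (ellipticK (Real.sqrt (1 - k ^ 2)) * Real.sqrt x)))

/-- Kuznetsov's moment integral `I_n^−`, realizing
`∫_ℝ x^{n+1} dx/(cos(√x K) − cosh(√x K'))` with `√x = i√(−x)` for `x < 0`. -/
noncomputable def Iminus (k : ℝ) (n : ℕ) : ℝ :=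
  (∫ x in Set.Ioi (0 : ℝ), x ^ (n + 1) /
      (Real.cos (ellipticK k * Real.sqrt x) -
        Real.cosh (ellipticK (Real.sqrt (1 - k ^ 2)) * Real.sqrt x)))
  + (-1 : ℝ) ^ (n + 1) * (∫ x in Set.Ioi (0 : ℝ), x ^ (n + 1) /
      (Real.cosh (ellipticK k * Real.sqrt x) -
        Real.cos (ellipticK (Real.sqrt (1 - k ^ 2)) * Real.sqrt x)))

/-! ### Gamma integrals and the kernel expansion -/

lemma integral_pow_mul_rexp (p : ℕ) {r : ℝ} (hr : 0 < r) :
    ∫ t : ℝ in Set.Ioi 0, t ^ p * Real.exp (-(r * t)) = (p.factorial : ℝ) / r ^ (p + 1) := by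
  have h := Real.integral_rpow_mul_exp_neg_mul_Ioi (a := (p : ℝ) + 1) (by positivity) hr
  have h2 : ((p : ℝ) + 1) = ((p + 1 : ℕ) : ℝ) := by push_cast; rfl
  rw [Real.Gamma_nat_eq_factorial] at h
  simp only [add_sub_cancel_right, Real.rpow_natCast] at h
  rw [h, h2, Real.rpow_natCast, one_div, inv_pow]
  ring

lemma integrableOn_pow_mul_rexp (p : ℕ) {r : ℝ} (hr : 0 < r) :
    IntegrableOn (fun t : ℝ ↦ t ^ p * Real.exp (-(r * t))) (Set.Ioi 0) := by
  apply Integrable.of_integral_ne_zero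
  rw [integral_pow_mul_rexp p hr]
  positivity

lemma norm_pow_mul_cexp (p : ℕ) (r : ℂ) {t : ℝ} (ht : 0 ≤ t) :
    ‖(t : ℂ) ^ p * Complex.exp (-(r * t))‖ = t ^ p * Real.exp (-(r.re * t)) := by
  rw [norm_mul, Complex.norm_exp, norm_pow, Complex.norm_real, Real.norm_of_nonneg ht]
  simp

lemma integrableOn_pow_mul_cexp (p : ℕ) {r : ℂ} (hr : 0 < r.re) :
    IntegrableOn (fun t : ℝ ↦ (t : ℂ) ^ p * Complex.exp (-(r * t))) (Set.Ioi 0) := by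
  refine (integrableOn_pow_mul_rexp p hr).mono' (by fun_prop) ?_
  filter_upwards [self_mem_ae_restrict measurableSet_Ioi] with t ht
  exact (norm_pow_mul_cexp p r (le_of_lt ht)).le

/-- The Gamma integral at a complex rate `r`, by induction on `p` through integration by parts. -/
lemma integral_pow_mul_cexp (p : ℕ) {r : ℂ} (hr : 0 < r.re) :
    ∫ t : ℝ in Set.Ioi 0, (t : ℂ) ^ p * Complex.exp (-(r * t)) =
      (p.factorial : ℂ) / r ^ (p + 1) := by
  have r0 : r ≠ 0 := fun h ↦ by simp [h] at hr
  induction p with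
  | zero =>
    have h := integral_exp_mul_complex_Ioi (a := -r) (by simpa) 0
    simpa using h
  | succ p ih =>
    have hd : ∀ t : ℝ, HasDerivAt (fun t : ℝ ↦ (t : ℂ) ^ (p + 1) * Complex.exp (-(r * t)))
        ((p + 1) * ((t : ℂ) ^ p * Complex.exp (-(r * t))) -
          r * ((t : ℂ) ^ (p + 1) * Complex.exp (-(r * t)))) t := by
      intro t
      have h : HasDerivAt (fun z : ℂ ↦ z ^ (p + 1) * Complex.exp (-(r * z))) _ (t : ℂ) :=
        (hasDerivAt_pow (p + 1) (t : ℂ)).mul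
          (((hasDerivAt_id (t : ℂ)).const_mul r).neg.cexp)
      refine h.comp_ofReal.congr_deriv ?_
      simp
      ring
    have hi := integrableOn_pow_mul_cexp p hr
    have hi' := integrableOn_pow_mul_cexp (p + 1) hr
    have hlim : Filter.Tendsto (fun t : ℝ ↦ (t : ℂ) ^ (p + 1) * Complex.exp (-(r * t)))
        Filter.atTop (nhds 0) := by
      rw [tendsto_zero_iff_norm_tendsto_zero]
      refine (tendsto_rpow_mul_exp_neg_mul_atTop_nhds_zero ((p + 1 : ℕ) : ℝ) r.re hr).congr' ?_
      filter_upwards [Filter.eventually_ge_atTop 0] with t ht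
      rw [norm_pow_mul_cexp _ _ ht, Real.rpow_natCast, neg_mul]
    have h := integral_Ioi_of_hasDerivAt_of_tendsto' (a := 0) (fun t _ ↦ hd t)
      ((hi.const_mul _).sub (hi'.const_mul _)) hlim
    rw [integral_sub (hi.const_mul _) (hi'.const_mul _), integral_const_mul, integral_const_mul,
      ih] at h
    have h3 : r * ∫ t : ℝ in Set.Ioi 0, (t : ℂ) ^ (p + 1) * Complex.exp (-(r * t)) =
      (p + 1) * ((p.factorial : ℂ) / r ^ (p + 1)) := by
      simp at h
      linear_combination -h
    rw [Nat.factorial_succ]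
    push_cast
    apply mul_left_cancel₀ r0
    rw [h3]
    field_simp
    ring

/-- With `x = exp (-(b - i a) t)` and `y = exp (-(b + i a) t)`, the factorization
`2 exp (-b t) (cosh (b t) - cos (a t)) = (1 - x) (1 - y)` turns the kernel into a product of two
geometric series. -/
lemma kernel_hasSum {a b t : ℝ} (hb : 0 < b) (ht : 0 < t) :
    HasSum (fun p : ℕ × ℕ ↦ 2 * Complex.exp
      (-(((1 + p.1 + p.2) * b - Complex.I * ((p.1 - p.2) * a)) * t)))
      (1 / (Real.cosh (b * t) - Real.cos (a * t) : ℝ) : ℂ) := by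
  set x : ℂ := Complex.exp (-(b * t) + Complex.I * (a * t)) with hx
  set y : ℂ := Complex.exp (-(b * t) - Complex.I * (a * t)) with hy
  have nx : ‖x‖ < 1 := by
    rw [hx, Complex.norm_exp]
    simp
    positivity
  have ny : ‖y‖ < 1 := by
    rw [hy, Complex.norm_exp]
    simp
    positivity
  have h := (hasSum_geometric_of_norm_lt_one nx).mul (hasSum_geometric_of_norm_lt_one ny)
    (summable_mul_of_summable_norm
      (by simpa using summable_geometric_of_lt_one (norm_nonneg x) nx)
      (by simpa using summable_geometric_of_lt_one (norm_nonneg y) ny))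
  have h2 := h.mul_left (2 * Complex.exp (-(b * t)))
  convert! h2 using 1
  · funext p
    rw [hx, hy, ← Complex.exp_nat_mul, ← Complex.exp_nat_mul, mul_assoc, ← Complex.exp_add,
      ← Complex.exp_add]
    congr 2
    ring
  · have x1 : (1 - x) ≠ 0 := by
      intro h0
      rw [← sub_eq_zero.mp h0] at nx; simp at nx
    have y1 : (1 - y) ≠ 0 := by
      intro h0
      rw [← sub_eq_zero.mp h0] at ny; simp at ny
    have key : 2 * Complex.exp (-(b * t)) * ((Real.cosh (b * t) - Real.cos (a * t) : ℝ) : ℂ)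
        = (1 - x) * (1 - y) := by
      push_cast
      rw [Complex.cosh, Complex.cos, hx, hy, Complex.exp_add, Complex.exp_sub]
      have e1 := Complex.exp_ne_zero (b * t)
      have e2 := Complex.exp_ne_zero (Complex.I * (a * t))
      rw [Complex.exp_neg, show (a * t : ℂ) * Complex.I = Complex.I * (a * t) by ring,
        show -(a * t : ℂ) * Complex.I = -(Complex.I * (a * t)) by ring, Complex.exp_neg]
      field_simp
      ring
    have hne : ((Real.cosh (b * t) - Real.cos (a * t) : ℝ) : ℂ) ≠ 0 := by
      intro h0; rw [h0, mul_zero] at key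
      exact mul_ne_zero x1 y1 key.symm
    rw [one_div, ← mul_inv, ← key, mul_inv, ← mul_assoc, mul_inv_cancel₀, one_mul]
    exact mul_ne_zero two_ne_zero (Complex.exp_ne_zero _)

lemma summable_one_div_nat_prod {M : ℕ} (hM : 4 ≤ M) :
    Summable (fun p : ℕ × ℕ ↦ 1 / ((1 + p.1 + p.2 : ℝ)) ^ M) := by
  have h1 : Summable (fun j : ℕ ↦ 1 / ((j : ℝ) + 1) ^ 2) := by
    have := (summable_nat_add_iff 1).mpr (Real.summable_one_div_nat_pow.mpr (one_lt_two))
    simpa using this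
  refine Summable.of_nonneg_of_le (fun p ↦ by positivity) (fun p ↦ ?_)
    (h1.mul_of_nonneg h1 (fun _ ↦ by positivity) (fun _ ↦ by positivity))
  have hp1 : (0 : ℝ) ≤ p.1 := by positivity
  have hp2 : (0 : ℝ) ≤ p.2 := by positivity
  rw [div_mul_div_comm, one_mul]
  apply one_div_le_one_div_of_le (by positivity)
  calc ((p.1 : ℝ) + 1) ^ 2 * (p.2 + 1) ^ 2 = ((p.1 + 1) * (p.2 + 1)) ^ 2 := by ring
    _ ≤ ((1 + p.1 + p.2 : ℝ) ^ 2) ^ 2 := by gcongr; nlinarith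
    _ = (1 + p.1 + p.2 : ℝ) ^ 4 := by ring
    _ ≤ _ := pow_le_pow_right₀ (by linarith) hM

/-- The sum of `(c b - i d a)^(-M)` over the integer points with `c + d` odd of the cone `c > |d|`,
parametrized by `c = 1 + j + l`, `d = j - l` with `j, l ≥ 0`. -/
noncomputable def coneSum (a b : ℝ) (M : ℕ) : ℂ :=
  ∑' p : ℕ × ℕ, 1 / ((1 + p.1 + p.2) * b - Complex.I * ((p.1 - p.2) * a) : ℂ) ^ M

/-- Termwise integration of `kernel_hasSum` after the substitution `x = t ^ 2`. -/
lemma moment_eq {a b : ℝ} (hb : 0 < b) (n : ℕ) :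
    ((∫ x in Set.Ioi (0 : ℝ), x ^ (n + 1) / (Real.cosh (b * √x) - Real.cos (a * √x)) : ℝ) : ℂ) =
      4 * (2 * n + 3).factorial * coneSum a b (2 * n + 4) := by
  rw [coneSum]
  have hs := integral_comp_rpow_Ioi_of_pos (p := 2)
    (g := fun x : ℝ ↦ x ^ (n + 1) / (Real.cosh (b * √x) - Real.cos (a * √x))) two_pos
  rw [← hs, ← integral_complex_ofReal]
  have re_eq (p : ℕ × ℕ) : ((1 + p.1 + p.2) * b - Complex.I * ((p.1 - p.2) * a) : ℂ).re
      = (1 + p.1 + p.2) * b := by simp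
  have H := hasSum_integral_of_summable_integral_norm (μ := volume.restrict (Set.Ioi (0 : ℝ)))
    (F := fun (p : ℕ × ℕ) (t : ℝ) ↦ (t : ℂ) ^ (2 * n + 3) * Complex.exp
      (-(((1 + p.1 + p.2) * b - Complex.I * ((p.1 - p.2) * a)) * t))) ?_ ?_
  · rw [← tsum_mul_left]
    have e : ∀ p : ℕ × ℕ, 4 * ((2 * n + 3).factorial : ℂ) *
        (1 / ((1 + p.1 + p.2) * b - Complex.I * ((p.1 - p.2) * a) : ℂ) ^ (2 * n + 4)) =
        4 * ∫ t : ℝ in Set.Ioi 0, (t : ℂ) ^ (2 * n + 3) * Complex.exp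
      (-(((1 + p.1 + p.2) * b - Complex.I * ((p.1 - p.2) * a)) * t)) := by
      intro p
      rw [integral_pow_mul_cexp _ (by rw [re_eq]; positivity)]
      ring
    simp_rw [e]
    rw [tsum_mul_left, H.tsum_eq, ← integral_const_mul]
    refine setIntegral_congr_fun measurableSet_Ioi fun t ht ↦ ?_
    have ht : (0 : ℝ) < t := ht
    have k := (kernel_hasSum (a := a) hb ht).mul_left (2 * (t : ℂ) ^ (2 * n + 3))
    have k2 : ∀ p : ℕ × ℕ, 2 * (t : ℂ) ^ (2 * n + 3) * (2 * Complex.exp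
      (-(((1 + p.1 + p.2) * b - Complex.I * ((p.1 - p.2) * a)) * t)))
      = 4 * ((t : ℂ) ^ (2 * n + 3) * Complex.exp
      (-(((1 + p.1 + p.2) * b - Complex.I * ((p.1 - p.2) * a)) * t))) := fun p ↦ by ring
    simp_rw [k2] at k
    simp only [← tsum_mul_left]
    rw [k.tsum_eq]
    have : √(t ^ (2 : ℝ)) = t := by rw [Real.rpow_two, Real.sqrt_sq ht.le]
    rw [this, show (2 : ℝ) - 1 = 1 by norm_num, Real.rpow_one, Real.rpow_two, smul_eq_mul]
    push_cast
    ring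
  · exact fun p ↦ integrableOn_pow_mul_cexp _ (by rw [re_eq]; positivity)
  · have e : ∀ p : ℕ × ℕ, ∫ t : ℝ in Set.Ioi 0, ‖(t : ℂ) ^ (2 * n + 3) * Complex.exp
      (-(((1 + p.1 + p.2) * b - Complex.I * ((p.1 - p.2) * a)) * t))‖ =
      (1 / (1 + p.1 + p.2 : ℝ) ^ (2 * n + 4)) * ((2 * n + 3).factorial / b ^ (2 * n + 4)) := by
      intro p
      have hr : 0 < (1 + p.1 + p.2) * b := by positivity
      trans ∫ t : ℝ in Set.Ioi 0, t ^ (2 * n + 3) * Real.exp (-(((1 + p.1 + p.2) * b) * t))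
      · refine setIntegral_congr_fun measurableSet_Ioi fun t ht ↦ ?_
        exact (norm_pow_mul_cexp _ _ (le_of_lt ht)).trans (by rw [re_eq])
      · rw [integral_pow_mul_rexp _ hr, mul_pow]
        field_simp
    simp_rw [e]
    exact (summable_one_div_nat_prod (by omega)).mul_right _


/-! ### The sum over lattice points with odd coordinate sum -/

/-- The term `(c b - i d a)^(-M)` with `c = 1 + s + r` and `d = s - r`; as `(s, r)` runs through `ℤ × ℤ`, the pair `(c, d)` runs
once through the pairs with `c + d` odd. -/
noncomputable def oddTerm (a b : ℝ) (M : ℕ) (p : ℤ × ℤ) : ℂ :=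
  1 / ((1 + p.1 + p.2) * b - Complex.I * ((p.1 - p.2) * a) : ℂ) ^ M

lemma summable_one_div_odd_sq : Summable (fun s : ℤ ↦ 1 / ((2 * s + 1 : ℝ)) ^ 2) := by
  have h1 : Summable (fun j : ℕ ↦ 1 / (2 * (j : ℝ) + 1) ^ 2) := by
    have := (Real.summable_one_div_nat_pow.mpr (one_lt_two)).comp_injective
      (i := fun j : ℕ ↦ 2 * j + 1) (fun x y h ↦ by simpa using h)
    simpa [Function.comp_def] using this
  refine Summable.of_nat_of_neg_add_one (by simpa using h1) (h1.congr fun j ↦ ?_)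
  push_cast
  congr 1
  ring

/-- The denominators grow like `max |c| |d|`, which dominates both `|2 s + 1| / 2` and
`|2 r + 1| / 2`. -/
lemma summable_oddTerm {a b : ℝ} (ha : 0 < a) (hb : 0 < b) {M : ℕ} (hM : 4 ≤ M) :
    Summable (oddTerm a b M) := by
  obtain ⟨d, hd, hda, hdb⟩ : ∃ d : ℝ, 0 < d ∧ d ≤ a ∧ d ≤ b :=
    ⟨min a b, lt_min ha hb, min_le_left _ _, min_le_right _ _⟩
  have h := (summable_one_div_odd_sq.mul_of_nonneg summable_one_div_odd_sq
    (fun _ ↦ by positivity) (fun _ ↦ by positivity)).mul_left (16 * (1 / d ^ M))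
  refine Summable.of_norm_bounded h fun p ↦ ?_
  set c : ℝ := 1 + p.1 + p.2 with hc
  set e : ℝ := p.1 - p.2 with he
  set m : ℝ := max |c| |e| with hm
  have hs : |2 * (p.1 : ℝ) + 1| ≤ 2 * m := by
    have : 2 * (p.1 : ℝ) + 1 = c + e := by rw [hc, he]; ring
    rw [this]
    linarith [abs_add_le c e, le_max_left |c| |e|, le_max_right |c| |e|]
  have hr : |2 * (p.2 : ℝ) + 1| ≤ 2 * m := by
    have : 2 * (p.2 : ℝ) + 1 = c - e := by rw [hc, he]; ring
    rw [this]
    linarith [abs_sub c e, le_max_left |c| |e|, le_max_right |c| |e|]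
  -- `c + e = 2 s + 1` is odd, so `c` and `e` are not both zero
  have one_le : ∀ s : ℤ, 1 ≤ |2 * (s : ℝ) + 1| := fun s ↦ by
    have : (1 : ℤ) ≤ |2 * s + 1| := Int.one_le_abs (by omega)
    exact_mod_cast this
  have hm1 : 1 ≤ m := by
    have h1 : (1 : ℤ) ≤ |1 + p.1 + p.2| ∨ (1 : ℤ) ≤ |p.1 - p.2| := by
      by_cases h0 : 1 + p.1 + p.2 = 0
      · exact Or.inr (Int.one_le_abs (by omega))
      · exact Or.inl (Int.one_le_abs h0)
    rcases h1 with h1 | h1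
    · exact le_max_of_le_left (by rw [hc]; exact_mod_cast h1)
    · exact le_max_of_le_right (by rw [he]; exact_mod_cast h1)
  have hnorm : d * m ≤ ‖((1 + p.1 + p.2) * b - Complex.I * ((p.1 - p.2) * a) : ℂ)‖ := by
    have h1 := Complex.abs_re_le_norm ((1 + p.1 + p.2) * b - Complex.I * ((p.1 - p.2) * a) : ℂ)
    have h2 := Complex.abs_im_le_norm ((1 + p.1 + p.2) * b - Complex.I * ((p.1 - p.2) * a) : ℂ)
    simp [abs_mul, abs_of_pos ha, abs_of_pos hb] at h1 h2
    rw [hm, mul_max_of_nonneg _ _ hd.le]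
    refine max_le (le_trans ?_ h1) (le_trans ?_ h2)
    · rw [mul_comm]; gcongr
    · rw [mul_comm]; gcongr
  have hM' : m ^ 4 ≤ m ^ M := pow_le_pow_right₀ hm1 hM
  rw [oddTerm, norm_div, norm_one, norm_pow]
  have hA : (2 * (p.1 : ℝ) + 1) ^ 2 * (2 * p.2 + 1) ^ 2 ≤ 16 * m ^ 4 := by
    rw [← sq_abs (2 * (p.1 : ℝ) + 1), ← sq_abs (2 * (p.2 : ℝ) + 1)]
    calc _ ≤ (2 * m) ^ 2 * (2 * m) ^ 2 := by gcongr
      _ = _ := by ring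
  have hP : 0 < (2 * (p.1 : ℝ) + 1) ^ 2 * (2 * p.2 + 1) ^ 2 := by
    rw [← sq_abs (2 * (p.1 : ℝ) + 1), ← sq_abs (2 * (p.2 : ℝ) + 1)]
    have := one_le p.1
    have := one_le p.2
    positivity
  calc 1 / ‖((1 + p.1 + p.2) * b - Complex.I * ((p.1 - p.2) * a) : ℂ)‖ ^ M
      ≤ 1 / (d * m) ^ M := by gcongr
    _ = 1 / d ^ M * (1 / m ^ M) := by rw [mul_pow, one_div_mul_one_div]
    _ ≤ 1 / d ^ M * (1 / m ^ 4) := by gcongr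
    _ ≤ 1 / d ^ M * (16 / ((2 * (p.1 : ℝ) + 1) ^ 2 * (2 * p.2 + 1) ^ 2)) := by
        gcongr 1 / d ^ M * ?_
        rw [div_le_div_iff₀ (by positivity) hP]
        linarith
    _ = _ := by rw [one_div_mul_one_div, div_eq_mul_one_div 16]; ring

/-- Splitting a sum over `ℤ × ℤ` into its four sign quadrants. -/
lemma tsum_int_prod {E : Type*} [NormedAddCommGroup E] [CompleteSpace E] {F : ℤ × ℤ → E} (hF : Summable F) :
    ∑' p, F p = (∑' p : ℕ × ℕ, F (p.1, p.2)) + (∑' p : ℕ × ℕ, F (p.1, -(p.2 + 1))) +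
      ((∑' p : ℕ × ℕ, F (-(p.1 + 1), p.2)) + ∑' p : ℕ × ℕ, F (-(p.1 + 1), -(p.2 + 1))) := by
  have i1 : Function.Injective (fun j : ℕ ↦ (j : ℤ)) := Nat.cast_injective
  have i2 : Function.Injective (fun j : ℕ ↦ -((j : ℤ) + 1)) := fun x y h ↦ by simpa using h
  have s11 : Summable fun p : ℕ × ℕ ↦ F (p.1, p.2) := hF.comp_injective (i1.prodMap i1)
  have s12 : Summable fun p : ℕ × ℕ ↦ F (p.1, -(p.2 + 1)) := hF.comp_injective (i1.prodMap i2)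
  have s21 : Summable fun p : ℕ × ℕ ↦ F (-(p.1 + 1), p.2) := hF.comp_injective (i2.prodMap i1)
  have s22 : Summable fun p : ℕ × ℕ ↦ F (-(p.1 + 1), -(p.2 + 1)) :=
    hF.comp_injective (i2.prodMap i2)
  have row : ∀ s : ℤ, ∑' r, F (s, r) = ∑' r : ℕ, F (s, r) + ∑' r : ℕ, F (s, -(r + 1)) := fun s ↦
    tsum_of_nat_of_neg_add_one (f := fun r ↦ F (s, r)) ((hF.prod_factor s).comp_injective i1)
      ((hF.prod_factor s).comp_injective i2)
  have col := tsum_of_nat_of_neg_add_one (f := fun s ↦ ∑' r, F (s, r))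
    (hF.prod.comp_injective i1) (hF.prod.comp_injective i2)
  rw [hF.tsum_prod, col]
  simp_rw [row]
  rw [s11.tsum_prod, s12.tsum_prod, s21.tsum_prod, s22.tsum_prod,
    s11.prod.tsum_add s12.prod, s21.prod.tsum_add s22.prod]

/-- The four sign quadrants of `(s, r)` are the cones `c > |d|`, `d > |c|` and their negatives;
multiplication by `i` exchanges the two kinds of cone together with `a` and `b`. -/
lemma tsum_oddTerm_eq_coneSum {a b : ℝ} (ha : 0 < a) (hb : 0 < b) (n : ℕ) :
    ∑' p, oddTerm a b (2 * n + 4) p =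
      2 * (coneSum a b (2 * n + 4) + (-1) ^ n * coneSum b a (2 * n + 4)) := by
  have hev : Even (2 * n + 4) := ⟨n + 2, by ring⟩
  have hI : Complex.I ^ (2 * n + 4) = (-1) ^ n := by
    rw [show 2 * n + 4 = 2 * (n + 2) by ring, pow_mul, Complex.I_sq, pow_add]; norm_num
  have hsq : ((-1 : ℂ) ^ n)⁻¹ = (-1) ^ n := by
    rw [← inv_pow]; norm_num
  rw [tsum_int_prod (summable_oddTerm ha hb (by omega))]
  have q11 : ∑' p : ℕ × ℕ, oddTerm a b (2 * n + 4) (p.1, p.2) = coneSum a b (2 * n + 4) := by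
    refine tsum_congr fun p ↦ ?_
    simp [oddTerm]
  have q22 : ∑' p : ℕ × ℕ, oddTerm a b (2 * n + 4) (-(p.1 + 1), -(p.2 + 1)) =
      coneSum a b (2 * n + 4) := by
    refine tsum_congr fun p ↦ ?_
    rw [oddTerm, ← hev.neg_pow]
    push_cast
    ring_nf
  have q12 : ∑' p : ℕ × ℕ, oddTerm a b (2 * n + 4) (p.1, -(p.2 + 1)) =
      (-1) ^ n * coneSum b a (2 * n + 4) := by
    rw [coneSum, ← (Equiv.prodComm ℕ ℕ).tsum_eq, ← tsum_mul_left]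
    refine tsum_congr fun p ↦ ?_
    rw [oddTerm, ← hev.neg_pow, ← hsq, ← hI, ← one_div, one_div_mul_one_div, ← mul_pow]
    congr 2
    push_cast [Equiv.prodComm_apply, Prod.fst_swap, Prod.snd_swap]
    linear_combination (p.1 - p.2 : ℂ) * b * Complex.I_sq
  have q21 : ∑' p : ℕ × ℕ, oddTerm a b (2 * n + 4) (-(p.1 + 1), p.2) =
      (-1) ^ n * coneSum b a (2 * n + 4) := by
    rw [coneSum, ← (Equiv.prodComm ℕ ℕ).tsum_eq, ← tsum_mul_left]
    refine tsum_congr fun p ↦ ?_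
    rw [oddTerm, ← hsq, ← hI, ← one_div, one_div_mul_one_div, ← mul_pow]
    congr 2
    push_cast [Equiv.prodComm_apply, Prod.fst_swap, Prod.snd_swap]
    linear_combination (p.1 - p.2 : ℂ) * b * Complex.I_sq
  rw [q11, q12, q21, q22]
  ring

/-! ### Summation by rows -/

/-- The sum of `(c b - i d a)^(-M)` over all `d = 2 s + 1 - c`, that is, over one row of the lattice
points with `c + d` odd. -/
noncomputable def rowSum (a b : ℝ) (M : ℕ) (c : ℤ) : ℂ :=
  ∑' s : ℤ, 1 / (c * b - Complex.I * ((2 * s + 1 - c) * a) : ℂ) ^ M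

/-- The change of coordinates `(c, s) ↦ (s, r)` with `c = 1 + s + r`. -/
def rowEquiv : ℤ × ℤ ≃ ℤ × ℤ where
  toFun p := (p.2, p.1 - 1 - p.2)
  invFun p := (1 + p.1 + p.2, p.1)
  left_inv p := by ext <;> simp
  right_inv p := by ext <;> simp; ring

lemma oddTerm_rowEquiv (a b : ℝ) (M : ℕ) (c s : ℤ) : oddTerm a b M (rowEquiv (c, s)) =
    1 / (c * b - Complex.I * ((2 * s + 1 - c) * a) : ℂ) ^ M := by
  simp only [oddTerm, rowEquiv, Equiv.coe_fn_mk]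
  push_cast
  ring_nf

lemma tsum_oddTerm_eq_rowSum {a b : ℝ} (ha : 0 < a) (hb : 0 < b) (n : ℕ) :
    ∑' p, oddTerm a b (2 * n + 4) p =
      rowSum a b (2 * n + 4) 0 + 2 * ∑' c : ℕ, rowSum a b (2 * n + 4) (c + 1) := by
  have hev : Even (2 * n + 4) := ⟨n + 2, by ring⟩
  have hS := summable_oddTerm ha hb (M := 2 * n + 4) (by omega)
  have hS' : Summable fun p ↦ oddTerm a b (2 * n + 4) (rowEquiv p) := rowEquiv.summable_iff.mpr hS
  rw [← rowEquiv.tsum_eq, hS'.tsum_prod]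
  have hr : ∀ c, ∑' s, oddTerm a b (2 * n + 4) (rowEquiv (c, s)) = rowSum a b (2 * n + 4) c :=
    fun c ↦ tsum_congr fun s ↦ oddTerm_rowEquiv a b _ c s
  have hsum := hS'.prod
  simp_rw [hr] at hsum ⊢
  rw [tsum_int_eq_zero_add_two_mul_tsum_pnat ?_ hsum]
  · rw [tsum_pnat_eq_tsum_succ (f := fun c : ℕ ↦ rowSum a b (2 * n + 4) c)]
    simp
  · intro c
    simp only [rowSum]
    rw [← (Equiv.subLeft (-1 : ℤ)).tsum_eq]
    refine tsum_congr fun s ↦ ?_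
    rw [← hev.neg_pow, Equiv.subLeft_apply]
    push_cast
    ring_nf

/-- The Lipschitz formula for the row `c + 1`, at the point `z = -c / 2 + i (c + 1) b / (2 a)`, for
which `exp (2 π i z) = q (-q) ^ c`. -/
lemma rowSum_succ {a b : ℝ} (ha : 0 < a) (hb : 0 < b) (n c : ℕ) :
    rowSum a b (2 * n + 4) (c + 1) = ((π / a) ^ (2 * n + 4) / (2 * n + 3).factorial : ℂ) *
      ∑' m : ℕ, ((m : ℂ) + 1) ^ (2 * n + 3) *
        ((Real.exp (-(π * b / a)) : ℂ) * (-(Real.exp (-(π * b / a)) : ℂ)) ^ c) ^ (m + 1) := by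
  have ha' : (a : ℂ) ≠ 0 := by exact_mod_cast ha.ne'
  set z : ℂ := (-c / 2 : ℂ) + Complex.I * ((c + 1) * b / (2 * a)) with hz
  have hzim : 0 < z.im := by
    have : z = ((-c / 2 : ℝ) : ℂ) + Complex.I * (((c + 1) * b / (2 * a) : ℝ) : ℂ) := by
      rw [hz]; push_cast; ring
    rw [this, Complex.add_im, Complex.ofReal_im, Complex.I_mul_im, Complex.ofReal_re]
    positivity
  have hq := EisensteinSeries.qExpansion_identity_pnat (k := 2 * n + 3) (by omega) ⟨z, hzim⟩
  rw [tsum_pnat_eq_tsum_succ (f := fun m : ℕ ↦ (m : ℂ) ^ (2 * n + 3) *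
    Complex.exp (2 * π * Complex.I * z) ^ m)] at hq
  have he : Complex.exp (2 * π * Complex.I * z) =
      (Real.exp (-(π * b / a)) : ℂ) * (-(Real.exp (-(π * b / a)) : ℂ)) ^ c := by
    rw [neg_pow, ← Complex.ofReal_pow, ← Real.exp_nat_mul]
    have h1 : (-1 : ℂ) ^ c = Complex.exp (c * (-(π * Complex.I))) := by
      rw [Complex.exp_nat_mul, Complex.exp_neg, Complex.exp_pi_mul_I]; norm_num
    rw [h1]
    push_cast
    rw [← Complex.exp_add, ← Complex.exp_add]
    congr 1
    rw [hz]
    field_simp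
    linear_combination (b * (c + 1) : ℂ) * Complex.I_sq
  rw [he] at hq
  have hrow : rowSum a b (2 * n + 4) (c + 1) =
      1 / (-2 * Complex.I * a) ^ (2 * n + 4) * ∑' s : ℤ, 1 / (z + s) ^ (2 * n + 4) := by
    rw [rowSum, ← tsum_mul_left]
    refine tsum_congr fun s ↦ ?_
    rw [one_div_mul_one_div, ← mul_pow]
    congr 2
    rw [hz]
    push_cast
    field_simp
    linear_combination ((c + 1) * b : ℂ) * Complex.I_sq
  rw [hrow]
  have hq' : ∑' s : ℤ, 1 / (z + s) ^ (2 * n + 4) = _ := hq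
  rw [hq']
  push_cast
  rw [← mul_assoc]
  congr 1
  rw [div_pow]
  simp only [mul_pow]
  have := Complex.I_ne_zero
  field_simp

lemma summable_double {q : ℝ} (q0 : 0 ≤ q) (q1 : q < 1) (k : ℕ) :
    Summable (fun p : ℕ × ℕ ↦ ((p.2 : ℂ) + 1) ^ k * ((q : ℂ) * (-(q : ℂ)) ^ p.1) ^ (p.2 + 1)) := by
  have h1 : Summable fun m : ℕ ↦ ((m : ℝ) + 1) ^ k * q ^ (m + 1) := by
    have := (summable_nat_add_iff 1).mpr (summable_pow_mul_geometric_of_norm_lt_one (R := ℝ) k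
      (r := q) (by rwa [Real.norm_of_nonneg q0]))
    simpa using this
  have h2 := (summable_geometric_of_lt_one q0 q1).mul_of_nonneg h1 (fun _ ↦ by positivity)
    (fun _ ↦ by positivity)
  refine Summable.of_norm_bounded h2 fun p ↦ ?_
  have e : ‖((p.2 : ℂ) + 1)‖ = (p.2 : ℝ) + 1 := by
    rw [← Nat.cast_succ, Complex.norm_natCast]; push_cast; rfl
  simp only [norm_mul, norm_pow, norm_neg, Complex.norm_real, Real.norm_of_nonneg q0, e]
  have hle : q ^ (p.1 * (p.2 + 1)) ≤ q ^ p.1 := pow_le_pow_of_le_one q0 q1.le (by nlinarith)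
  calc ((p.2 : ℝ) + 1) ^ k * (q * q ^ p.1) ^ (p.2 + 1)
      = q ^ (p.1 * (p.2 + 1)) * (((p.2 : ℝ) + 1) ^ k * q ^ (p.2 + 1)) := by
        rw [mul_pow, ← pow_mul]; ring
    _ ≤ _ := mul_le_mul_of_nonneg_right hle (by positivity)

/-- Interchanging the two summations leaves a geometric series in `(-q) ^ (m + 1)`. -/
lemma tsum_rowSum {a b : ℝ} (ha : 0 < a) (hb : 0 < b) (n : ℕ) :
    ∑' c : ℕ, rowSum a b (2 * n + 4) (c + 1) =
      ((π / a) ^ (2 * n + 4) / (2 * n + 3).factorial : ℂ) *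
      ∑' m : ℕ, ((m : ℂ) + 1) ^ (2 * n + 3) * (Real.exp (-(π * b / a)) : ℂ) ^ (m + 1) /
        (1 - (-(Real.exp (-(π * b / a)) : ℂ)) ^ (m + 1)) := by
  simp_rw [rowSum_succ ha hb]
  rw [tsum_mul_left]
  congr 1
  set q := Real.exp (-(π * b / a)) with hq
  have q0 : 0 < q := Real.exp_pos _
  have q1 : q < 1 := by rw [hq, Real.exp_lt_one_iff]; simp; positivity
  have hcomm := Summable.tsum_comm (f := fun c m : ℕ ↦ ((m : ℂ) + 1) ^ (2 * n + 3) *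
    ((q : ℂ) * (-(q : ℂ)) ^ c) ^ (m + 1)) (summable_double q0.le q1 (2 * n + 3))
  rw [← hcomm]
  refine tsum_congr fun m ↦ ?_
  have hn : ‖(-(q : ℂ)) ^ (m + 1)‖ < 1 := by
    rw [norm_pow, norm_neg, Complex.norm_real, Real.norm_of_nonneg q0.le]
    exact pow_lt_one₀ q0.le q1 (by omega)
  rw [div_eq_mul_inv, ← tsum_geometric_of_norm_lt_one hn, ← tsum_mul_left]
  refine tsum_congr fun c ↦ ?_
  rw [mul_pow, ← pow_mul, ← pow_mul, mul_comm c]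
  ring

lemma hasSum_odd (k : ℕ) (hk : k ≠ 0) :
    HasSum (fun j : ℕ ↦ 1 / (2 * (j : ℝ) + 1) ^ (2 * k))
      ((-1 : ℝ) ^ (k + 1) * ((2 ^ (2 * k) - 1) / 2) * π ^ (2 * k) *
        bernoulli (2 * k) / (2 * k).factorial) := by
  have hz := hasSum_zeta_nat hk
  have hodd : Summable (fun j : ℕ ↦ 1 / (2 * (j : ℝ) + 1) ^ (2 * k)) := by
    have := hz.summable.comp_injective
      (i := fun j : ℕ ↦ 2 * j + 1) (fun x y h ↦ by simpa using h)
    simpa [Function.comp_def] using this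
  have heven : HasSum (fun j : ℕ ↦ 1 / ((2 * j : ℕ) : ℝ) ^ (2 * k)) _ :=
    (hz.mul_left (1 / (2 : ℝ) ^ (2 * k))).congr_fun fun j ↦ by
      push_cast; rw [mul_pow, one_div_mul_one_div]
  have h := heven.even_add_odd (f := fun j : ℕ ↦ 1 / (j : ℝ) ^ (2 * k))
    (by simpa only [Nat.cast_add, Nat.cast_mul, Nat.cast_one, Nat.cast_ofNat] using hodd.hasSum)
  have := h.unique hz
  convert! hodd.hasSum using 1
  have h2 : (2 : ℝ) ^ (2 * k) = 2 * 2 ^ (2 * k - 1) := by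
    rw [← pow_succ']; congr 1; omega
  rw [eq_comm, ← sub_eq_iff_eq_add'.mpr this.symm, h2]
  field_simp

lemma rowSum_zero (a b : ℝ) (n : ℕ) :
    rowSum a b (2 * n + 4) 0 = -(((2 ^ (2 * n + 4) - 1) * π ^ (2 * n + 4) *
        bernoulli (2 * n + 4) / (2 * n + 4).factorial / a ^ (2 * n + 4) : ℝ) : ℂ) := by
  have ho := hasSum_odd (n + 2) (by omega)
  have hI : (-Complex.I) ^ (2 * n + 4) = (-1) ^ n := by
    rw [show 2 * n + 4 = 2 * (n + 2) by ring, pow_mul, neg_sq, Complex.I_sq, pow_add]; norm_num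
  have hz : HasSum (fun s : ℤ ↦ 1 / (2 * (s : ℝ) + 1) ^ (2 * (n + 2))) _ :=
    ho.of_nat_of_neg_add_one (f := fun s : ℤ ↦ 1 / (2 * (s : ℝ) + 1) ^ (2 * (n + 2)))
      (ho.congr_fun fun j ↦ by
        rw [← (even_two_mul (n + 2)).neg_pow]; push_cast; congr 2; ring)
  have hc := (Complex.hasSum_ofReal.mpr hz).mul_left (1 / ((-Complex.I) * a) ^ (2 * n + 4))
  rw [rowSum]
  trans ∑' s : ℤ, 1 / ((-Complex.I) * a) ^ (2 * n + 4) *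
    ((1 / (2 * (s : ℝ) + 1) ^ (2 * (n + 2)) : ℝ) : ℂ)
  · refine tsum_congr fun s ↦ ?_
    push_cast
    rw [show 2 * (n + 2) = 2 * n + 4 by ring, one_div_mul_one_div, ← mul_pow]
    congr 2
    ring
  · rw [hc.tsum_eq, mul_pow, hI, show 2 * (n + 2) = 2 * n + 4 by ring]
    have h1 : ((-1 : ℂ) ^ n) * (-1) ^ n = 1 := by rw [← mul_pow]; norm_num
    push_cast
    rw [one_div, mul_inv, ← inv_pow, show (-1 : ℂ)⁻¹ = -1 by norm_num,
      show (-1 : ℂ) ^ (n + 2 + 1) = - (-1) ^ n by ring]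
    linear_combination (-((2 ^ (2 * n + 4) - 1) * π ^ (2 * n + 4) *
        bernoulli (2 * n + 4) / (2 * n + 4).factorial / a ^ (2 * n + 4)) : ℂ) * h1

/-! ### Conclusion -/

lemma ellipticK_pos {k : ℝ} (hk : k ∈ Set.Ioo (0 : ℝ) 1) : 0 < ellipticK k := by
  rw [ellipticK]
  have hpos : ∀ θ : ℝ, 0 < 1 - k ^ 2 * Real.sin θ ^ 2 := fun θ ↦ by
    have := Real.sin_sq_le_one θ
    have : k ^ 2 < 1 := by nlinarith [hk.1, hk.2]
    nlinarith [sq_nonneg (Real.sin θ), sq_nonneg k]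
  refine intervalIntegral.intervalIntegral_pos_of_pos ?_ (fun θ ↦ Real.rpow_pos_of_pos (hpos θ) _)
    (by positivity)
  apply Continuous.intervalIntegrable
  exact Continuous.rpow_const (by fun_prop) (fun θ ↦ Or.inl (hpos θ).ne')

theorem Iminus_lambert_series (k : ℝ) (hk : k ∈ Set.Ioo (0 : ℝ) 1) (n : ℕ) :
    Iminus k n =
      -(π / ellipticK k) ^ (2 * n + 4) *
        (((-((2 ^ (2 * n + 4) - 1) * bernoulli (2 * n + 4)) / (n + 2) : ℚ) : ℝ) +
          4 * ∑' m : ℕ, ((m : ℝ) + 1) ^ (2 * n + 3) *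
            Real.exp (-(π * ellipticK (Real.sqrt (1 - k ^ 2)) / ellipticK k)) ^ (m + 1) /
              (1 - (-Real.exp (-(π * ellipticK (Real.sqrt (1 - k ^ 2)) / ellipticK k))) ^ (m + 1))) := by
  set a := ellipticK k with hadef
  set b := ellipticK (Real.sqrt (1 - k ^ 2)) with hbdef
  have ha : 0 < a := ellipticK_pos hk
  have hb : 0 < b := by
    refine ellipticK_pos ⟨Real.sqrt_pos.mpr (by nlinarith [hk.1, hk.2]), ?_⟩
    rw [Real.sqrt_lt' one_pos]
    nlinarith [hk.1]
  have h1 := moment_eq (a := a) hb n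
  have h2 := moment_eq (a := b) ha n
  have hS := (tsum_oddTerm_eq_coneSum ha hb n).symm.trans (tsum_oddTerm_eq_rowSum ha hb n)
  rw [tsum_rowSum ha hb, rowSum_zero] at hS
  have hneg : (∫ x in Set.Ioi (0 : ℝ), x ^ (n + 1) / (Real.cos (a * √x) - Real.cosh (b * √x))) =
      -∫ x in Set.Ioi (0 : ℝ), x ^ (n + 1) / (Real.cosh (b * √x) - Real.cos (a * √x)) := by
    rw [← integral_neg]
    refine integral_congr_ae (Filter.Eventually.of_forall fun x ↦ ?_)
    simp only
    rw [← div_neg, neg_sub]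
  apply Complex.ofReal_injective
  rw [Iminus, ← hadef, ← hbdef, hneg, Complex.ofReal_add, Complex.ofReal_neg, Complex.ofReal_mul,
    h1, h2]
  have hfac : ((2 * n + 4).factorial : ℂ) = (2 * (n + 2)) * (2 * n + 3).factorial := by
    rw [Nat.factorial_succ]; push_cast; ring
  have hf0 : ((2 * n + 3).factorial : ℂ) ≠ 0 := by exact_mod_cast Nat.factorial_ne_zero _
  have hn2 : (n + 2 : ℂ) ≠ 0 := by exact_mod_cast (by omega : n + 2 ≠ 0)
  have ha' : (a : ℂ) ≠ 0 := by exact_mod_cast ha.ne'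
  push_cast at hS ⊢
  rw [hfac] at hS
  have hS' := congrArg (fun z ↦ -2 * ((2 * n + 3).factorial : ℂ) * z) hS
  refine (Eq.trans ?_ hS').trans ?_
  · ring
  · generalize (∑' m : ℕ, ((m : ℂ) + 1) ^ (2 * n + 3) * Complex.exp (-(π * b / a)) ^ (m + 1) /
      (1 - (-Complex.exp (-(π * b / a))) ^ (m + 1))) = T
    rw [div_pow]
    field_simp
    ring
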